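/- Let (H, x, Y) be an sl2-triple in a finite-dimensional Lie algebra g over a field k of characteristic zero, and assume x is even, i.e. g_1 = 0. Let 𝔳 be the supremum of the subspaces g_i over all integers i ≥ 2, and let ⁅𝔳, 𝔳⁆ be the k-span of all brackets of pairs of elements of 𝔳. Then the composite k-linear map g_2 → 𝔳 → 𝔳/⁅𝔳, 𝔳⁆ (inclusion followed by the quotient projection) is a linear isomorphism. -/

import Mathlib

/-- The `i`-eigenspace of `ad H` on a Lie algebra `g`:
`g_i = {z ∈ g | ⁅H, z⁆ = (i : k) • z}`. -/
def gwt (k : Type*) [Field k] {g : Type*} [LieRing g] [LieAlgebra k g]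
    (H : g) (i : ℤ) : Submodule k g where
  carrier := {z | ⁅H, z⁆ = (i : k) • z}
  add_mem' := by
    intro a b ha hb
    simp only [Set.mem_setOf_eq] at *
    rw [lie_add, ha, hb, smul_add]
  zero_mem' := by simp
  smul_mem' := by
    intro c a ha
    simp only [Set.mem_setOf_eq] at *
    rw [lie_smul, ha]
    exact smul_comm c ((i : k)) a

/-- The sum `⨆ {i ≥ n} g_i` of the eigenspaces of `ad H` with eigenvalue at least `n`. -/
def vsp (k : Type*) [Field k] {g : Type*} [LieRing g] [LieAlgebra k g]
    (H : g) (n : ℤ) : Submodule k g :=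
  ⨆ i : ℤ, ⨆ _ : n ≤ i, gwt k H i

/-- The commutator subspace `⁅V, V⁆`: the `k`-span of all brackets of pairs of
elements of `V`. -/
def brkt (k : Type*) [Field k] {g : Type*} [LieRing g] [LieAlgebra k g]
    (V : Submodule k g) : Submodule k g :=
  Submodule.span k {w : g | ∃ a ∈ V, ∃ b ∈ V, w = ⁅a, b⁆}

lemma gwt_le_vsp (k : Type*) [Field k] {g : Type*} [LieRing g] [LieAlgebra k g]
    (H : g) {n i : ℤ} (h : n ≤ i) : gwt k H i ≤ vsp k H n :=
  le_iSup_of_le i (le_iSup_of_le h le_rfl)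

/-- The composite map `g_2 → 𝔳 → 𝔳 ⧸ ⁅𝔳, 𝔳⁆`, where `𝔳 = ⨆ {i ≥ 2} g_i`. -/
def inclClassMap (k : Type*) [Field k] {g : Type*} [LieRing g] [LieAlgebra k g]
    (H : g) :
    gwt k H 2 → (vsp k H 2 ⧸ (brkt k (vsp k H 2)).comap (vsp k H 2).subtype) :=
  fun a => Submodule.Quotient.mk
    (Submodule.inclusion (gwt_le_vsp k H (le_refl (2 : ℤ))) a)

lemma mem_gwt {k : Type*} [Field k] {g : Type*} [LieRing g] [LieAlgebra k g]
    {H : g} {i : ℤ} {z : g} : z ∈ gwt k H i ↔ ⁅H, z⁆ = (i : k) • z := Iff.rfl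

lemma gwt_lie {k : Type*} [Field k] {g : Type*} [LieRing g] [LieAlgebra k g]
    {H : g} {i j l : ℤ} {a b : g} (ha : a ∈ gwt k H i) (hb : b ∈ gwt k H j) (hl : i + j = l) :
    ⁅a, b⁆ ∈ gwt k H l := by
  subst hl
  rw [mem_gwt] at *
  rw [leibniz_lie, ha, hb, smul_lie, lie_smul, ← add_smul]
  push_cast
  rfl

lemma gwt_eq_eigenspace {k : Type*} [Field k] {g : Type*} [LieRing g] [LieAlgebra k g]
    (H : g) (i : ℤ) : gwt k H i = Module.End.eigenspace (LieAlgebra.ad k g H) (i : k) := by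
  ext z
  rw [mem_gwt, Module.End.mem_eigenspace_iff, LieAlgebra.ad_apply]

lemma gwt_indep {k : Type*} [Field k] [CharZero k] {g : Type*} [LieRing g] [LieAlgebra k g]
    (H : g) : iSupIndep (gwt k H) := by
  have h := (Module.End.eigenspaces_iSupIndep (LieAlgebra.ad k g H)).comp
    (Int.cast_injective (α := k))
  have e : gwt k H = Module.End.eigenspace (LieAlgebra.ad k g H) ∘ (Int.cast : ℤ → k) := by
    funext i
    exact gwt_eq_eigenspace H i
  rw [e]
  exact h

lemma iter_mem {k : Type*} [Field k] {g : Type*} [LieRing g] [LieAlgebra k g]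
    {H x : g} (hx : x ∈ gwt k H 2) {i : ℤ} {z : g} (hz : z ∈ gwt k H i) (N : ℕ) :
    ((fun w => ⁅x, w⁆)^[N]) z ∈ gwt k H (i + 2 * N) := by
  induction N with
  | zero => simpa using hz
  | succ N ih =>
    rw [Function.iterate_succ_apply']
    exact gwt_lie hx ih (by push_cast; ring)

lemma iter_zero {k : Type*} [Field k] [CharZero k] {g : Type*} [LieRing g] [LieAlgebra k g]
    [FiniteDimensional k g]
    {H x : g} (hx : x ∈ gwt k H 2) {i : ℤ} {z : g} (hz : z ∈ gwt k H i) :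
    ∃ N : ℕ, ((fun w => ⁅x, w⁆)^[N]) z = 0 := by
  by_contra! hne
  have hfin := (WellFoundedGT.finite_ne_bot_of_iSupIndep (gwt_indep (k := k) H))
  have hinj : Function.Injective (fun N : ℕ => i + 2 * (N : ℤ)) := by
    intro a b h
    simp only at h
    omega
  refine Set.infinite_of_injective_forall_mem hinj (s := {j | gwt k H j ≠ ⊥}) ?_ hfin
  intro N hb
  have := iter_mem hx hz N
  rw [hb] at this
  exact hne N (by simpa using this)

lemma comm_formula {k : Type*} [Field k] {g : Type*} [LieRing g] [LieAlgebra k g]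
    {H x Y : g} (hx : x ∈ gwt k H 2) (hxY : ⁅x, Y⁆ = H)
    {i : ℤ} {z : g} (hz : z ∈ gwt k H i) (N : ℕ) :
    ((fun w => ⁅x, w⁆)^[N+1]) ⁅Y, z⁆ = ⁅Y, ((fun w => ⁅x, w⁆)^[N+1]) z⁆
      + (((N + 1) * (i + N) : ℤ) : k) • ((fun w => ⁅x, w⁆)^[N]) z := by
  induction N with
  | zero =>
    simp only [Function.iterate_succ_apply', Function.iterate_zero, id]
    rw [leibniz_lie, hxY, mem_gwt.1 hz]
    simp [add_comm]
  | succ N ih =>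
    rw [Function.iterate_succ_apply', ih]
    have h1 := iter_mem hx hz (N+1)
    rw [lie_add, leibniz_lie, hxY, mem_gwt.1 h1, lie_smul,
      Function.iterate_succ_apply' _ (N+1), Function.iterate_succ_apply' _ N z]
    rw [add_comm _ ⁅Y, _⁆, add_assoc, ← add_smul]
    congr 2
    push_cast
    ring

lemma surj_aux {k : Type*} [Field k] [CharZero k] {g : Type*} [LieRing g] [LieAlgebra k g]
    {H x Y : g} (hx : x ∈ gwt k H 2) (hY : Y ∈ gwt k H (-2)) (hxY : ⁅x, Y⁆ = H)
    {i : ℤ} (hi : 1 ≤ i) (N : ℕ) : ∀ z ∈ gwt k H i, ((fun w => ⁅x, w⁆)^[N]) z = 0 →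
    ∃ u ∈ gwt k H (i - 2), z = ⁅x, u⁆ := by
  induction N with
  | zero =>
    intro z _ h
    exact ⟨0, zero_mem _, by simpa using h⟩
  | succ N ih =>
    intro z hz h
    set c : k := (((N + 1) * (i + N) : ℤ) : k) with hc
    have hc0 : c ≠ 0 := by
      rw [hc]
      refine Int.cast_ne_zero.2 (ne_of_gt ?_)
      positivity
    have hYz : ⁅Y, z⁆ ∈ gwt k H (i - 2) := gwt_lie hY hz (by ring)
    have hcf := comm_formula hx hxY hz N
    rw [h, lie_zero, zero_add, ← hc, Function.iterate_succ_apply] at hcf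
    have hit : ∀ w, ((fun w => ⁅x, w⁆)^[N]) w = ((LieAlgebra.ad k g x) ^ N) w := by
      intro w
      rw [Module.End.pow_apply]
      rfl
    obtain ⟨u, hu, hu2⟩ := ih (⁅x, ⁅Y, z⁆⁆ - c • z)
      (sub_mem (gwt_lie hx hYz (by ring)) (Submodule.smul_mem _ _ hz))
      (by
        rw [hit, hit] at hcf
        rw [hit, map_sub, hcf, map_smul, sub_self])
    refine ⟨c⁻¹ • (⁅Y, z⁆ - u), Submodule.smul_mem _ _ (sub_mem hYz hu), ?_⟩
    rw [lie_smul, lie_sub, ← hu2, sub_sub_cancel, smul_smul, inv_mul_cancel₀ hc0, one_smul]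

lemma gwt_lift {k : Type*} [Field k] [CharZero k] {g : Type*} [LieRing g] [LieAlgebra k g]
    [FiniteDimensional k g]
    {H x Y : g} (hx : x ∈ gwt k H 2) (hY : Y ∈ gwt k H (-2)) (hxY : ⁅x, Y⁆ = H)
    {i : ℤ} (hi : 1 ≤ i) {z : g} (hz : z ∈ gwt k H i) :
    ∃ u ∈ gwt k H (i - 2), z = ⁅x, u⁆ := by
  obtain ⟨N, hN⟩ := iter_zero hx hz
  exact surj_aux hx hY hxY hi N z hz hN

lemma brkt_le {k : Type*} [Field k] {g : Type*} [LieRing g] [LieAlgebra k g] (H : g) :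
    brkt k (vsp k H 2) ≤ vsp k H 4 := by
  have h1 : ∀ i : ℤ, 2 ≤ i → ∀ a ∈ gwt k H i, ∀ b ∈ vsp k H 2, ⁅a, b⁆ ∈ vsp k H 4 := by
    intro i hi a ha
    have : vsp k H 2 ≤ (vsp k H 4).comap (LieAlgebra.ad k g a) :=
      iSup₂_le fun j hj b hb =>
        gwt_le_vsp k H (by omega : 4 ≤ i + j) (gwt_lie ha hb rfl)
    exact fun b hb => this hb
  have h2 : ∀ b ∈ vsp k H 2, ∀ a ∈ vsp k H 2, ⁅b, a⁆ ∈ vsp k H 4 := by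
    intro b hb
    have : vsp k H 2 ≤ (vsp k H 4).comap (LieAlgebra.ad k g b) := by
      refine iSup₂_le fun j hj a ha => ?_
      rw [Submodule.mem_comap, LieAlgebra.ad_apply, ← lie_skew]
      exact neg_mem (h1 j hj a ha b hb)
    exact fun a ha => this ha
  refine Submodule.span_le.2 ?_
  rintro w ⟨a, ha, b, hb, rfl⟩
  exact h2 a ha b hb

/-- If `x` is even (`g_1 = 0`), then the composite `k`-linear map
`g_2 → 𝔳 → 𝔳 ⧸ ⁅𝔳, 𝔳⁆` is a linear isomorphism. -/
theorem stmt9 {k : Type*} [Field k] [CharZero k]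
    {g : Type*} [LieRing g] [LieAlgebra k g] [FiniteDimensional k g]
    (H x Y : g) (hHx : ⁅H, x⁆ = (2 : k) • x) (hHY : ⁅H, Y⁆ = (-2 : k) • Y)
    (hxY : ⁅x, Y⁆ = H) (heven : gwt k H 1 = ⊥) :
    IsLinearMap k (inclClassMap k H) ∧ Function.Bijective (inclClassMap k H) := by
  have hx : x ∈ gwt k H 2 := by
    rw [mem_gwt]
    exact_mod_cast hHx
  have hY : Y ∈ gwt k H (-2) := by
    rw [mem_gwt]
    exact_mod_cast hHY
  have hlin : IsLinearMap k (inclClassMap k H) := ⟨fun a b => rfl, fun c a => rfl⟩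
  refine ⟨hlin, ?_, ?_⟩
  · intro a b hab
    have hab' := (Submodule.Quotient.eq _).1 hab
    have h1 : (a : g) - b ∈ vsp k H 4 := brkt_le H hab'
    have h2 : (a : g) - b ∈ gwt k H 2 := sub_mem a.2 b.2
    have hd : Disjoint (gwt k H 2) (vsp k H 4) := by
      refine (gwt_indep (k := k) H 2).mono_right ?_
      refine iSup₂_le fun j hj => ?_
      exact le_iSup₂_of_le j (by omega) le_rfl
    exact Subtype.ext (sub_eq_zero.1 (Submodule.disjoint_def.1 hd _ h2 h1))
  · have hle : vsp k H 2 ≤ gwt k H 2 ⊔ brkt k (vsp k H 2) := by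
      refine iSup₂_le fun j hj z hz => ?_
      rcases eq_or_ne j 2 with rfl | h2
      · exact Submodule.mem_sup_left hz
      obtain ⟨u, hu, rfl⟩ := gwt_lift hx hY hxY (by omega) hz
      rcases eq_or_ne j 3 with rfl | h3
      · have hu' : u ∈ gwt k H 1 := hu
        rw [heven, Submodule.mem_bot] at hu'
        rw [hu', lie_zero]
        exact zero_mem _
      · exact Submodule.mem_sup_right (Submodule.subset_span
          ⟨x, gwt_le_vsp k H le_rfl hx, u, gwt_le_vsp k H (by omega) hu, rfl⟩)
    intro q
    obtain ⟨v, rfl⟩ := Submodule.Quotient.mk_surjective _ q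
    obtain ⟨a, ha, b, hb, hab⟩ := Submodule.mem_sup.1 (hle v.2)
    refine ⟨⟨a, ha⟩, (Submodule.Quotient.eq _).2 ?_⟩
    change a - (v : g) ∈ brkt k (vsp k H 2)
    rw [← hab, sub_add_cancel_left]
    exact neg_mem hb
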